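/- arXiv:0805.0730 — 2 statements merged into one kernel-verified Lean document; each statement's English description precedes it below -/
import Mathlib

section
/- Let s be the epistandard word directed by Δ = x1 x2 x3 ⋯ over a finite alphabet A, and let t be an episturmian word directed by some spinned version of Δ. Then for every n ≥ 0, t begins with Pal(x1⋯xn) if and only if t has a directive word of the form x1⋯xn x̆_{n+1} x̆_{n+2} ⋯, i.e., a spinned version of Δ whose first n letters all have spin L. -/
/-!
The equivalence is proved by induction on `n`, peeling off the first letter `a` of the directive
word. Write `ψ w = L_a(w) a`; then also `ψ w = a R_a(w)`, so `ψ` commutes with reversal.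

* `Pal_cons` (Justin's formula): `Pal (a v) = ψ (Pal v)`. The palindromic suffixes of `ψ w` that
  begin with `a` are exactly the `ψ p` with `p` a palindromic suffix of `w`, so `ψ` is compatible
  with palindromic closure.
* `isPref_psi_iff`: if `x = L_a(w)`, then `x` begins with `ψ p` iff `w` begins with `p`. Hence
  `L_a(w)` begins with `Pal (a v)` iff `w` begins with `Pal v`, which settles the induction step
  when the first spin is `L`.
* `Directs.tail`: if `w` is directed by a spinned version of `Δ`, then so is `w` deprived of its
  first letter. Indeed removing the first letter of `L_a(w')` gives `R_a(w')`, and removing that of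
  `R_a(w')` gives `R_a` or `L_a` of the tail of `w'`, according to whether `w'` begins with `a`.
  So one propagates the removal along the directive word up to its first letter of spin `L`, or
  forever if there is none.

If the first spin is `R`, say `t = R_a(t')`, and `t` begins with `a`, then `t' = a t''` and
`t = a R_a(t'') = L_a(t'')`. By `Directs.tail`, `t''` is directed by a spinned version of the
shifted directive word, so the first spin can be replaced by `L`.
-/

namespace EpiQP

/-- `u` is a prefix of the infinite word `w`. -/
def IsPref {σ : Type*} (u : List σ) (w : ℕ → σ) : Prop :=
  ∀ (i : ℕ) (h : i < u.length), u.get ⟨i, h⟩ = w i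

/-- The prefix of length `n` of the infinite word `w`. -/
def prefWord {σ : Type*} (w : ℕ → σ) (n : ℕ) : List σ :=
  List.ofFn (fun i : Fin n => w i)

/-- The finite word `u` occurs in the infinite word `w` at position `k`. -/
def OccursAt {σ : Type*} (u : List σ) (w : ℕ → σ) (k : ℕ) : Prop :=
  ∀ (i : ℕ) (h : i < u.length), u.get ⟨i, h⟩ = w (k + i)

/-- `u` is a (finite) factor of the infinite word `w`. -/
def IsFactorInf {σ : Type*} (u : List σ) (w : ℕ → σ) : Prop :=
  ∃ k, OccursAt u w k

/-- An infinite word is recurrent if each of its factors occurs infinitely often in it. -/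
def Recurrent {σ : Type*} (w : ℕ → σ) : Prop :=
  ∀ (u : List σ) (k : ℕ), OccursAt u w k → ∀ N, ∃ m, N ≤ m ∧ OccursAt u w m

/-- `u` is a quasiperiod of the infinite word `w`: `u` is non-empty and there is a
sequence of prefixes `p n ++ u` of `w` with `p 0 = ε` and
`|p n| < |p (n+1)| ≤ |p n ++ u|`. -/
def IsQuasiperiod {A : Type*} (u : List A) (w : ℕ → A) : Prop :=
  u ≠ [] ∧ ∃ p : ℕ → List A, p 0 = [] ∧
    (∀ n, (p n).length < (p (n + 1)).length ∧
      (p (n + 1)).length ≤ (p n).length + u.length) ∧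
    ∀ n, IsPref (p n ++ u) w

/-- An infinite word is quasiperiodic if it has a quasiperiod. -/
def Quasiperiodic {A : Type*} (w : ℕ → A) : Prop := ∃ u, IsQuasiperiod u w

/-- A set `X` of finite words covers the infinite word `w`. -/
def CoveredBy {A : Type*} (X : Set (List A)) (w : ℕ → A) : Prop :=
  ∃ (p z : ℕ → List A), p 0 = [] ∧ (∀ n, z n ∈ X) ∧
    (∀ n, (p n).length < (p (n + 1)).length ∧
      (p (n + 1)).length ≤ (p n).length + (z n).length) ∧
    ∀ n, IsPref (p n ++ z n) w

/-- The morphism `L_a` : `a ↦ a`, `b ↦ ab` for `b ≠ a`. -/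
def Lm {A : Type*} [DecidableEq A] (a : A) (u : List A) : List A :=
  u.flatMap (fun b => if b = a then [a] else [a, b])

/-- The morphism `R_a` : `a ↦ a`, `b ↦ ba` for `b ≠ a`. -/
def Rm {A : Type*} [DecidableEq A] (a : A) (u : List A) : List A :=
  u.flatMap (fun b => if b = a then [a] else [b, a])

/-- The pure epistandard morphism `μ_v = L_{v_1} ∘ ⋯ ∘ L_{v_k}` for `v = v_1 ⋯ v_k`. -/
def muL {A : Type*} [DecidableEq A] (v : List A) (u : List A) : List A :=
  v.foldr Lm u

/-- The pure episturmian morphism `μ_{v̄} = R_{v_1} ∘ ⋯ ∘ R_{v_k}` for `v = v_1 ⋯ v_k`. -/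
def muR {A : Type*} [DecidableEq A] (v : List A) (u : List A) : List A :=
  v.foldr Rm u

/-- Spinned letters are elements of `A × Bool`: `(a, false)` is the `L`-spinned letter `a`
and `(a, true)` is the `R`-spinned letter `ā`.  `μ` on a spinned letter. -/
def muS {A : Type*} [DecidableEq A] (x : A × Bool) : List A → List A :=
  if x.2 then Rm x.1 else Lm x.1

/-- The pure episturmian morphism `μ_{w̆}` directed by the finite spinned word `w̆`. -/
def muW {A : Type*} [DecidableEq A] (w : List (A × Bool)) (u : List A) : List A :=
  w.foldr muS u

/-- `x` is the image of the infinite word `w` under the (letterwise) morphism whose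
image on the letter `a` is `f a` (all images being non-empty). -/
def SubstOf {A : Type*} (f : A → List A) (w x : ℕ → A) : Prop :=
  ∀ n, IsPref ((prefWord w n).flatMap f) x

/-- The spinned infinite word `Δ` directs the infinite word `t`: there is a sequence
`ts` of recurrent infinite words with `ts 0 = t` and `ts n = μ_{Δ n}(ts (n+1))`. -/
def Directs {A : Type*} [DecidableEq A] (Δ : ℕ → A × Bool) (t : ℕ → A) : Prop :=
  ∃ ts : ℕ → (ℕ → A), ts 0 = t ∧ (∀ n, Recurrent (ts n)) ∧
    ∀ n, SubstOf (fun a => muS (Δ n) [a]) (ts (n + 1)) (ts n)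

/-- An infinite word is episturmian iff it is directed by some spinned infinite word. -/
def Episturmian {A : Type*} [DecidableEq A] (t : ℕ → A) : Prop :=
  ∃ Δ : ℕ → A × Bool, Directs Δ t

/-- The palindromic right-closure `w⁽⁺⁾`: the shortest palindrome having `w` as a
prefix, obtained by appending the reverse of `w` deprived of its longest
palindromic suffix. -/
def palClosure {A : Type*} [DecidableEq A] (w : List A) : List A :=
  w ++ (w.take (w.length -
    Nat.findGreatest
      (fun k => (w.drop (w.length - k)).reverse = w.drop (w.length - k)) w.length)).reverse

/-- Iterated palindromic closure: `Pal ε = ε`, `Pal (w x) = (Pal w · x)⁽⁺⁾`. -/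
def Pal {A : Type*} [DecidableEq A] (w : List A) : List A :=
  w.foldl (fun p x => palClosure (p ++ [x])) []

/-- `s` is the epistandard word directed by `Δ`, i.e. `s = lim_n Pal(Δ_1 ⋯ Δ_n)`. -/
def IsEpistandardOf {A : Type*} [DecidableEq A] (Δ : ℕ → A) (s : ℕ → A) : Prop :=
  ∀ n, IsPref (Pal (prefWord Δ n)) s

/-- The concatenation of a finite word and an infinite word. -/
def catInf {σ : Type*} (u : List σ) (y : ℕ → σ) : ℕ → σ :=
  fun n => if h : n < u.length then u.get ⟨n, h⟩ else y (n - u.length)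

/-- Prepending a letter to an infinite word. -/
def consInf {σ : Type*} (a : σ) (w : ℕ → σ) : ℕ → σ :=
  fun n => match n with
  | 0 => a
  | Nat.succ k => w k

def UltimatelyPeriodic {A : Type*} (w : ℕ → A) : Prop :=
  ∃ p N : ℕ, 0 < p ∧ ∀ n, N ≤ n → w (n + p) = w n

/-- A factor `u` of `t` is right special if `ua`, `ub` are factors of `t` for two
distinct letters `a`, `b`. -/
def RightSpecial {A : Type*} (u : List A) (t : ℕ → A) : Prop :=
  ∃ a b : A, a ≠ b ∧ IsFactorInf (u ++ [a]) t ∧ IsFactorInf (u ++ [b]) t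

/-- The combinatorial definition of episturmian words: the set of factors is closed
under reversal, and there is at most one right special factor of each length. -/
def EpisturmianC {A : Type*} (t : ℕ → A) : Prop :=
  (∀ u : List A, IsFactorInf u t → IsFactorInf u.reverse t) ∧
  ∀ u v : List A, RightSpecial u t → RightSpecial v t → u.length = v.length → u = v

/-- The shifting factor `S_{w̆}` of `μ_{w̆}` (so that `μ_{w̆}(v) = S_{w̆}⁻¹ μ_w(v) S_{w̆}`):
`S_ε = ε`, `S_{a w̆} = L_a(S_{w̆})`, `S_{ā w̆} = L_a(S_{w̆}) a`. -/
def Sfac {A : Type*} [DecidableEq A] : List (A × Bool) → List A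
  | [] => []
  | x :: v => if x.2 then Lm x.1 (Sfac v) ++ [x.1] else Lm x.1 (Sfac v)

/-- A spinned infinite word is normalized if it contains infinitely many `L`-spinned
letters but no factor of the form `ā v̄ a` (`v̄` being `R`-spinned). -/
def NormalizedInf {A : Type*} (Δ : ℕ → A × Bool) : Prop :=
  (∀ N, ∃ n, N ≤ n ∧ (Δ n).2 = false) ∧
  ∀ (a : A) (i j : ℕ), i < j → Δ i = (a, true) →
    (∀ k, i < k → k < j → (Δ k).2 = true) → Δ j ≠ (a, false)

/-- A finite spinned word is normalized if it has no factor of the form `ā v̄ a`. -/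
def NormalizedFin {A : Type*} (u : List (A × Bool)) : Prop :=
  ¬ ∃ (a : A) (w1 w2 : List (A × Bool)) (z : List A),
      u = w1 ++ (a, true) :: (z.map (fun x => (x, true)) ++ (a, false) :: w2)

/-- Strict lexicographic order on infinite words induced by the order on letters. -/
def LexLt {A : Type*} [LinearOrder A] (x y : ℕ → A) : Prop :=
  ∃ n : ℕ, (∀ i, i < n → x i = y i) ∧ x n < y n

/-- An infinite word is an infinite Lyndon word if it is strictly lexicographically
smaller than each of its proper suffixes. -/
def InfLyndon {A : Type*} [LinearOrder A] (w : ℕ → A) : Prop :=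
  ∀ i : ℕ, 0 < i → LexLt w (fun n => w (n + i))

/-- A return to `v` in `w`: the segment of `w` between two consecutive occurrences
of `v`. -/
def IsReturn {σ : Type*} (v : List σ) (w : ℕ → σ) (r : List σ) : Prop :=
  ∃ k k' : ℕ, k < k' ∧ OccursAt v w k ∧ OccursAt v w k' ∧
    (∀ j, k < j → j < k' → ¬ OccursAt v w j) ∧
    r = List.ofFn (fun i : Fin (k' - k) => w (k + i))

/-- `u` is a quasiperiod of the finite word `z`: every position of `z` falls within
some occurrence of `u` in `z`. -/
def IsQuasiperiodFin {A : Type*} (u z : List A) : Prop :=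
  u ≠ [] ∧ ∀ i, i < z.length → ∃ k, k ≤ i ∧ i < k + u.length ∧ u <+: z.drop k


/-! ### The map `w ↦ L_a(w) a` and palindromic closure -/

section Finite
variable {A : Type*} [DecidableEq A]

/-- The map `ψ_a(w) = L_a(w) a`. -/
def psi (a : A) (w : List A) : List A := Lm a w ++ [a]

theorem Lm_append (a : A) (u v : List A) : Lm a (u ++ v) = Lm a u ++ Lm a v := by
  simp [Lm]

theorem Lm_cons (a b : A) (u : List A) :
    Lm a (b :: u) = (if b = a then [a] else [a, b]) ++ Lm a u := by
  simp [Lm]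

theorem Rm_cons (a b : A) (u : List A) :
    Rm a (b :: u) = (if b = a then [a] else [b, a]) ++ Rm a u := by
  simp [Rm]

theorem psi_nil (a : A) : psi a [] = [a] := by simp [psi, Lm]

theorem psi_append (a : A) (u v : List A) : psi a (u ++ v) = Lm a u ++ psi a v := by
  simp [psi, Lm_append]

theorem psi_cons_self (a : A) (u : List A) : psi a (a :: u) = a :: psi a u := by
  simp [psi, Lm_cons]

theorem psi_cons_ne {a b : A} (h : b ≠ a) (u : List A) : psi a (b :: u) = a :: b :: psi a u := by
  simp [psi, Lm_cons, h]

/-- `L_a` and `R_a` are conjugate: `L_a(w) a = a R_a(w)`. -/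
theorem psi_eq_cons_Rm (a : A) (u : List A) : psi a u = a :: Rm a u := by
  induction u with
  | nil => simp [psi, Lm, Rm]
  | cons b u ih =>
    by_cases h : b = a
    · subst h; simp [psi_cons_self, ih, Rm_cons]
    · simp [psi_cons_ne h, ih, Rm_cons, h]

theorem reverse_Lm (a : A) (u : List A) : (Lm a u).reverse = Rm a u.reverse := by
  induction u with
  | nil => simp [Lm, Rm]
  | cons b u ih =>
    by_cases h : b = a
    · subst h; simp [Lm_cons, ih, Rm]
    · simp [Lm_cons, ih, h, Rm]

theorem reverse_psi (a : A) (u : List A) : (psi a u).reverse = psi a u.reverse := by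
  rw [psi_eq_cons_Rm a u.reverse, ← reverse_Lm]; simp [psi]

theorem prefix_of_psi_prefix (a : A) (p : List A) :
    ∀ q : List A, psi a p <+: psi a q → p <+: q := by
  induction p with
  | nil => intro q _; exact List.nil_prefix
  | cons b p ih =>
    intro q h
    cases q with
    | nil =>
      have := h.length_le
      by_cases hb : b = a
      · subst hb; simp [psi_cons_self, psi_nil] at this; simp [psi] at this
      · simp [psi_cons_ne hb, psi_nil] at this
    | cons c q =>
      by_cases hb : b = a <;> by_cases hc : c = a
      · subst hb; subst hc
        rw [psi_cons_self, psi_cons_self, List.cons_prefix_cons] at h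
        exact List.cons_prefix_cons.2 ⟨rfl, ih q h.2⟩
      · subst hb
        rw [psi_cons_self, psi_cons_ne hc, List.cons_prefix_cons, psi_eq_cons_Rm,
          List.cons_prefix_cons] at h
        exact absurd h.2.1.symm hc
      · subst hc
        rw [psi_cons_self, psi_cons_ne hb, List.cons_prefix_cons, psi_eq_cons_Rm _ q,
          List.cons_prefix_cons] at h
        exact absurd h.2.1 hb
      · rw [psi_cons_ne hb, psi_cons_ne hc, List.cons_prefix_cons, List.cons_prefix_cons] at h
        exact List.cons_prefix_cons.2 ⟨h.2.1, ih q h.2.2⟩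

theorem psi_injective (a : A) : Function.Injective (psi a) := by
  intro p q h
  have h1 := prefix_of_psi_prefix a p q (h ▸ List.prefix_rfl)
  have h2 := prefix_of_psi_prefix a q p (h ▸ List.prefix_rfl)
  exact h1.eq_of_length (le_antisymm h1.length_le h2.length_le)

/-- The letter `a` marks the beginnings of the blocks of `ψ w`. -/
theorem suffix_psi (a : A) (w q : List A) (h : a :: q <:+ psi a w) :
    ∃ w', w' <:+ w ∧ a :: q = psi a w' := by
  induction w with
  | nil =>
    refine ⟨[], List.suffix_rfl, ?_⟩
    rw [psi_nil] at h ⊢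
    rw [List.suffix_cons_iff] at h
    simpa using h
  | cons b w ih =>
    have key : a :: q <:+ psi a w → ∃ w', w' <:+ b :: w ∧ a :: q = psi a w' := fun h => by
      obtain ⟨w', h1, h2⟩ := ih h
      exact ⟨w', h1.trans (List.suffix_cons b w), h2⟩
    by_cases hb : b = a
    · subst hb
      rw [psi_cons_self, List.suffix_cons_iff] at h
      rcases h with h | h
      · exact ⟨b :: w, List.suffix_rfl, by rw [h, psi_cons_self]⟩
      · exact key h
    · rw [psi_cons_ne hb, List.suffix_cons_iff, List.suffix_cons_iff] at h
      rcases h with h | h | h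
      · exact ⟨b :: w, List.suffix_rfl, by rw [h, psi_cons_ne hb]⟩
      · exact absurd (List.cons.inj h).1.symm hb
      · exact key h

/-- In `ψ w`, every letter `x ≠ a` is preceded by `a`. -/
theorem exists_append_of_psi_eq {a x : A} (hx : x ≠ a) (w z q : List A)
    (h : psi a w = z ++ x :: q ++ [a]) : ∃ z', z = z' ++ [a] := by
  induction w generalizing z with
  | nil =>
    have := congrArg List.length h
    simp [psi_nil] at this
    omega
  | cons b w ih =>
    cases z with
    | nil =>
      rw [psi_eq_cons_Rm] at h
      exact absurd (List.cons.inj h).1.symm hx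
    | cons c z =>
      have hc : c = a := by rw [psi_eq_cons_Rm] at h; exact (List.cons.inj h).1.symm
      subst hc
      cases z with
      | nil => exact ⟨[], rfl⟩
      | cons d z =>
        by_cases hb : b = c
        · subst hb
          rw [psi_cons_self] at h
          obtain ⟨z', hz'⟩ := ih (d :: z) (List.cons.inj h).2
          exact ⟨b :: z', by rw [hz']; rfl⟩
        · rw [psi_cons_ne hb] at h
          obtain ⟨z', hz'⟩ := ih z (List.cons.inj (List.cons.inj h).2).2
          exact ⟨c :: d :: z', by rw [hz']; rfl⟩

/-- If `p` is the longest palindromic suffix of `w = u p`, the palindromic closure of `w` is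
`u p ũ`, where `ũ` is the reversal of `u`. -/
theorem palClosure_eq (u p : List A) (hp : p.reverse = p)
    (hmax : ∀ q, q <:+ u ++ p → q.reverse = q → q.length ≤ p.length) :
    palClosure (u ++ p) = u ++ p ++ u.reverse := by
  unfold palClosure
  set P : ℕ → Prop := fun k =>
    ((u ++ p).drop ((u ++ p).length - k)).reverse = (u ++ p).drop ((u ++ p).length - k) with hP
  have h1 : p.length ≤ Nat.findGreatest P (u ++ p).length := by
    apply Nat.le_findGreatest (by simp)
    simp [hP, hp]
  have h2 : Nat.findGreatest P (u ++ p).length ≤ p.length := by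
    have hle := Nat.findGreatest_le (P := P) (u ++ p).length
    have hs : P (Nat.findGreatest P (u ++ p).length) :=
      Nat.findGreatest_spec (P := P) (Nat.zero_le _) (by simp [hP])
    have := hmax _ (List.drop_suffix _ _) hs
    rw [List.length_drop] at this
    omega
  rw [le_antisymm h2 h1]
  simp

theorem exists_longest_palindromic_suffix (w : List A) :
    ∃ u p, w = u ++ p ∧ p.reverse = p ∧
      ∀ q, q <:+ w → q.reverse = q → q.length ≤ p.length := by
  set P : ℕ → Prop := fun k => (w.drop (w.length - k)).reverse = w.drop (w.length - k) with hP
  have hle := Nat.findGreatest_le (P := P) w.length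
  refine ⟨w.take (w.length - Nat.findGreatest P w.length),
    w.drop (w.length - Nat.findGreatest P w.length), by simp, ?_, ?_⟩
  · exact Nat.findGreatest_spec (P := P) (Nat.zero_le _) (by simp [hP])
  · intro q hq hr
    have : q.length ≤ Nat.findGreatest P w.length := by
      apply Nat.le_findGreatest hq.length_le
      simp only [hP]
      rw [← List.suffix_iff_eq_drop.1 hq, hr]
    rw [List.length_drop]
    omega

theorem length_psi_le_of_suffix {a : A} {u v w : List A} (hu : u <:+ w) (hv : v <:+ w)
    (h : u.length ≤ v.length) : (psi a u).length ≤ (psi a v).length := by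
  obtain ⟨z, rfl⟩ := List.suffix_of_suffix_length_le hu hv h
  simp [psi_append]

/-- Every nonempty palindromic suffix of `ψ w` beginning with `a` is at most as long as `ψ p`, for
`p` the longest palindromic suffix of `w`. -/
theorem length_le_of_palindromic_suffix_psi {a : A} {w p q : List A} (hp : p <:+ w)
    (hmax : ∀ q, q <:+ w → q.reverse = q → q.length ≤ p.length)
    (hq : a :: q <:+ psi a w) (hr : (a :: q).reverse = a :: q) :
    (a :: q).length ≤ (psi a p).length := by
  obtain ⟨w', h1, h2⟩ := suffix_psi a w q hq
  rw [h2, reverse_psi] at hr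
  rw [h2]
  exact length_psi_le_of_suffix h1 hp (hmax w' h1 (psi_injective a hr))

theorem psi_palindromic_extension (a : A) (u p : List A) :
    psi a (u ++ p ++ u.reverse) = Lm a u ++ psi a p ++ (Lm a u).reverse := by
  rw [reverse_Lm, List.append_assoc, psi_append, psi_append, psi_eq_cons_Rm a u.reverse]
  simp [psi]

theorem palClosure_psi (a : A) (w : List A) : palClosure (psi a w) = psi a (palClosure w) := by
  obtain ⟨u, p, rfl, hp, hmax⟩ := exists_longest_palindromic_suffix w
  rw [palClosure_eq u p hp hmax, psi_palindromic_extension, psi_append]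
  apply palClosure_eq
  · rw [reverse_psi, hp]
  · intro q hq hr
    rw [← psi_append] at hq
    cases q using List.reverseRecOn with
    | nil => simp
    | append_singleton q c =>
      -- A nonempty suffix of `ψ w` ends with `a`; being a palindrome, it also begins with `a`.
      have hc : c = a := by
        obtain ⟨z, hz⟩ := hq
        rw [psi, ← List.append_assoc] at hz
        simpa using (List.append_inj_right' hz rfl)
      subst hc
      rw [List.reverse_append] at hr
      simp only [List.reverse_cons, List.reverse_nil, List.nil_append, List.cons_append] at hr
      rw [← hr] at hq ⊢
      refine length_le_of_palindromic_suffix_psi (List.suffix_append u p) hmax hq ?_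
      rw [hr]; simpa using hr

/-- For a word `w x` with `x ≠ a`, the closing letter of `ψ` is supplied by the palindromic
closure itself. -/
theorem palClosure_Lm_append {a x : A} (hx : x ≠ a) (w : List A) :
    palClosure (Lm a (w ++ [x])) = psi a (palClosure (w ++ [x])) := by
  obtain ⟨u, p, hup, hp, hmax⟩ := exists_longest_palindromic_suffix (w ++ [x])
  have hp0 : 1 ≤ p.length := hmax [x] (List.suffix_append _ _) rfl
  -- The longest palindromic suffix `p` of `w x` begins with `x`.
  obtain ⟨p', rfl⟩ : ∃ p', p = x :: p' := by
    cases p using List.reverseRecOn with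
    | nil => simp at hp0
    | append_singleton p c =>
      have hc : x = c := by
        rw [← List.append_assoc] at hup
        simpa using (List.append_inj_right' hup rfl)
      subst hc
      exact ⟨p.reverse, by rw [← hp]; simp⟩
  -- Accordingly `ψ p = a q₀ a` with `q₀` a palindrome.
  have hpsi := reverse_psi a (x :: p')
  rw [hp] at hpsi
  have hq : psi a (x :: p') = a :: (x :: Lm a p' ++ [a]) := by simp [psi, Lm_cons, hx]
  have hq0 : (x :: Lm a p').reverse = x :: Lm a p' := by
    rw [hq, List.reverse_cons, List.reverse_append] at hpsi
    apply List.append_cancel_right (bs := [a])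
    simpa using hpsi
  have hL : Lm a (w ++ [x]) = (Lm a u ++ [a]) ++ (x :: Lm a p') := by
    rw [hup, Lm_append, Lm_cons]; simp [hx]
  rw [hL, palClosure_eq _ _ hq0, hup, palClosure_eq u _ hp (by rw [← hup]; exact hmax),
    psi_palindromic_extension, hq]
  · simp
  · intro q hs hr
    rw [← hL] at hs
    obtain ⟨z, hz⟩ := hs
    -- A nonempty palindromic suffix `q` begins with `x ≠ a`, hence is preceded by `a`.
    cases q using List.reverseRecOn with
    | nil => simp
    | append_singleton q c =>
      have hc : c = x := by
        rw [Lm_append, ← List.append_assoc] at hz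
        have h' : Lm a [x] = [a] ++ [x] := by simp [Lm, hx]
        rw [h', ← List.append_assoc] at hz
        simpa using (List.append_inj_right' hz rfl)
      subst hc
      have hr' := hr
      rw [List.reverse_append] at hr'
      simp only [List.reverse_cons, List.reverse_nil, List.nil_append, List.cons_append] at hr'
      have hza : ∃ z', z = z' ++ [a] := by
        have hw : z ++ c :: q.reverse ++ [a] = psi a (w ++ [c]) := by
          rw [hr', hz, psi]
        exact exists_append_of_psi_eq hx _ _ _ hw.symm
      obtain ⟨z', rfl⟩ := hza
      have h1 : a :: ((q ++ [c]) ++ [a]) <:+ psi a (w ++ [c]) := by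
        refine ⟨z', ?_⟩
        rw [psi, ← hz]; simp
      have h2 : (a :: ((q ++ [c]) ++ [a])).reverse = a :: ((q ++ [c]) ++ [a]) := by
        rw [List.reverse_cons, List.reverse_append, hr]; simp
      have h3 := length_le_of_palindromic_suffix_psi ⟨u, hup.symm⟩ hmax h1 h2
      rw [hq] at h3
      simpa using h3

theorem Pal_append_singleton (v : List A) (x : A) :
    Pal (v ++ [x]) = palClosure (Pal v ++ [x]) := by
  simp [Pal]

/-- Justin's formula `Pal (a v) = L_a(Pal v) a`. -/
theorem Pal_cons (a : A) (v : List A) : Pal (a :: v) = psi a (Pal v) := by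
  induction v using List.reverseRecOn with
  | nil =>
    have h := palClosure_psi a ([] : List A)
    have h0 : palClosure ([] : List A) = [] := by simp [palClosure]
    rw [h0, psi_nil] at h
    rw [show Pal (a :: []) = palClosure [a] from rfl, h]
    simp [Pal, psi_nil]
  | append_singleton v x ih =>
    rw [← List.cons_append, Pal_append_singleton, ih, Pal_append_singleton]
    by_cases hx : x = a
    · subst hx
      rw [← palClosure_psi]
      simp [psi, Lm]
    · rw [← palClosure_Lm_append hx]
      simp [psi, Lm, hx]

end Finite

/-! ### Prefixes of infinite words -/

section Infinite
variable {A : Type*}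

/-- The infinite word deprived of its first letter. -/
def tl (w : ℕ → A) : ℕ → A := fun k => w (k + 1)

theorem isPref_nil (w : ℕ → A) : IsPref [] w := fun i h => by simp at h

theorem isPref_cons (b : A) (u : List A) (w : ℕ → A) :
    IsPref (b :: u) w ↔ b = w 0 ∧ IsPref u (tl w) := by
  constructor
  · intro h
    exact ⟨h 0 (by simp), fun i hi => h (i + 1) (by simpa using hi)⟩
  · rintro ⟨h0, h⟩ i hi
    cases i with
    | zero => exact h0
    | succ i => exact h i (by simpa using hi)

theorem IsPref.of_append {u v : List A} {w : ℕ → A} (h : IsPref (u ++ v) w) : IsPref u w := by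
  induction u generalizing w with
  | nil => exact isPref_nil w
  | cons b u ih =>
    rw [List.cons_append, isPref_cons] at h
    exact (isPref_cons _ _ _).2 ⟨h.1, ih h.2⟩

theorem IsPref.prefix_of_length_le {u v : List A} {w : ℕ → A} (hu : IsPref u w) (hv : IsPref v w)
    (h : u.length ≤ v.length) : u <+: v := by
  induction u generalizing v w with
  | nil => exact List.nil_prefix
  | cons b u ih =>
    cases v with
    | nil => simp at h
    | cons c v =>
      rw [isPref_cons] at hu hv
      exact List.cons_prefix_cons.2 ⟨hu.1.trans hv.1.symm, ih hu.2 hv.2 (by simpa using h)⟩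

theorem length_prefWord (w : ℕ → A) (n : ℕ) : (prefWord w n).length = n := by simp [prefWord]

theorem isPref_prefWord (w : ℕ → A) (n : ℕ) : IsPref (prefWord w n) w := by
  intro i h; simp [prefWord]

theorem IsPref.eq_prefWord {u : List A} {w : ℕ → A} (h : IsPref u w) :
    u = prefWord w u.length :=
  (h.prefix_of_length_le (isPref_prefWord w _) (by simp [length_prefWord])).eq_of_length
    (by simp [length_prefWord])

theorem prefWord_succ (w : ℕ → A) (n : ℕ) : prefWord w (n + 1) = w 0 :: prefWord (tl w) n := by
  simp [prefWord, List.ofFn_succ, tl]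

theorem prefWord_succ' (w : ℕ → A) (n : ℕ) : prefWord w (n + 1) = prefWord w n ++ [w n] := by
  unfold prefWord
  rw [List.ofFn_succ']
  simp [List.concat_eq_append]

theorem Recurrent.tl {w : ℕ → A} (h : Recurrent w) : Recurrent (tl w) := by
  intro u k hk N
  have hk' : OccursAt u w (k + 1) := fun i hi => by
    rw [hk i hi]; simp only [EpiQP.tl]; congr 1; omega
  obtain ⟨m, hm, ho⟩ := h u (k + 1) hk' (N + 1)
  refine ⟨m - 1, by omega, fun i hi => ?_⟩
  rw [ho i hi]; simp only [EpiQP.tl]; congr 1; omega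

/-! ### Images of infinite words under `L_a` and `R_a` -/

variable [DecidableEq A]

theorem substOf_muS_iff (x : A × Bool) (w y : ℕ → A) :
    SubstOf (fun a => muS x [a]) w y ↔ ∀ n, IsPref (muS x (prefWord w n)) y := by
  unfold SubstOf muS
  cases x.2 <;> simp [Lm, Rm]

theorem substOf_R_iff (a : A) (w y : ℕ → A) :
    SubstOf (fun b => muS (a, true) [b]) w y ↔ ∀ n, IsPref (Rm a (prefWord w n)) y := by
  rw [substOf_muS_iff]; rfl

/-- `y = L_a(w)` iff `y` begins with `ψ u` for each prefix `u` of `w`. -/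
theorem substOf_L_iff (a : A) (w y : ℕ → A) :
    SubstOf (fun b => muS (a, false) [b]) w y ↔ ∀ n, IsPref (psi a (prefWord w n)) y := by
  rw [substOf_muS_iff]
  change (∀ n, IsPref (Lm a (prefWord w n)) y) ↔ _
  constructor
  · intro h n
    have hn := h (n + 1)
    rw [prefWord_succ', Lm_append] at hn
    by_cases hb : w n = a
    · simpa [Lm, hb, psi] using hn
    · have : Lm a (prefWord w n) ++ Lm a [w n] = psi a (prefWord w n) ++ [w n] := by
        simp [Lm, hb, psi]
      rw [this] at hn
      exact hn.of_append
  · intro h n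
    exact (h n).of_append

/-- `y = L_a(w)` iff `y = a R_a(w)`. -/
theorem substOf_L_iff_R (a : A) (w y : ℕ → A) :
    SubstOf (fun b => muS (a, false) [b]) w y ↔
      a = y 0 ∧ SubstOf (fun b => muS (a, true) [b]) w (tl y) := by
  rw [substOf_L_iff, substOf_R_iff]
  simp only [psi_eq_cons_Rm, isPref_cons]
  exact ⟨fun h => ⟨(h 0).1, fun n => (h n).2⟩, fun h n => ⟨h.1, h.2 n⟩⟩

theorem substOf_R_zero {a : A} {w y : ℕ → A}
    (h : SubstOf (fun b => muS (a, true) [b]) w y) : y 0 = w 0 := by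
  have h1 := (substOf_R_iff a w y).1 h 1
  rw [prefWord_succ, Rm_cons] at h1
  by_cases hb : w 0 = a
  · simp only [hb, if_true, List.cons_append, isPref_cons] at h1
    rw [hb, ← h1.1]
  · simp only [hb, if_false, List.cons_append, isPref_cons] at h1
    exact h1.1.symm

theorem substOf_R_tl_of_eq {a : A} {w y : ℕ → A}
    (h : SubstOf (fun b => muS (a, true) [b]) w y) (hw : w 0 = a) :
    SubstOf (fun b => muS (a, true) [b]) (tl w) (tl y) := by
  rw [substOf_R_iff] at h ⊢
  intro n
  have h1 := h (n + 1)
  rw [prefWord_succ, Rm_cons, if_pos hw, List.cons_append, isPref_cons] at h1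
  exact h1.2

theorem substOf_R_tl_of_ne {a : A} {w y : ℕ → A}
    (h : SubstOf (fun b => muS (a, true) [b]) w y) (hw : w 0 ≠ a) :
    SubstOf (fun b => muS (a, false) [b]) (tl w) (tl y) := by
  rw [substOf_R_iff] at h
  rw [substOf_L_iff]
  intro n
  have h1 := h (n + 1)
  rw [prefWord_succ, Rm_cons, if_neg hw, List.cons_append, isPref_cons] at h1
  rw [psi_eq_cons_Rm]
  exact h1.2

theorem isPref_psi_iff {a : A} {w y : ℕ → A}
    (h : SubstOf (fun b => muS (a, false) [b]) w y) (p : List A) :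
    IsPref (psi a p) y ↔ IsPref p w := by
  rw [substOf_L_iff] at h
  constructor
  · intro hp
    have hq := h p.length
    have hlen := length_prefWord w p.length
    have : p = prefWord w p.length := by
      rcases le_total (psi a p).length (psi a (prefWord w p.length)).length with hl | hl
      · exact (prefix_of_psi_prefix a _ _ (hp.prefix_of_length_le hq hl)).eq_of_length hlen.symm
      · exact ((prefix_of_psi_prefix a _ _
          (hq.prefix_of_length_le hp hl)).eq_of_length hlen).symm
    rw [this]
    exact isPref_prefWord _ _
  · intro hp
    rw [hp.eq_prefWord]
    exact h _

/-! ### Directive words -/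

theorem directs_cons {ΔS : ℕ → A × Bool} {t : ℕ → A} :
    Directs ΔS t ↔ Recurrent t ∧ ∃ t', SubstOf (fun a => muS (ΔS 0) [a]) t' t ∧
      Directs (tl ΔS) t' := by
  constructor
  · rintro ⟨ts, rfl, hr, hs⟩
    exact ⟨hr 0, ts 1, hs 0, tl ts, rfl, fun n => hr (n + 1), fun n => hs (n + 1)⟩
  · rintro ⟨hrt, t', hs0, ts, rfl, hr, hs⟩
    refine ⟨fun n => Nat.casesOn n t ts, rfl, ?_, ?_⟩
    · rintro (_ | n)
      · exact hrt
      · exact hr n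
    · rintro (_ | n)
      · exact hs0
      · exact hs n

/-- The words directed by a spinned version of a given directive word are closed under removal of
the first letter. -/
theorem Directs.tail {ΔS : ℕ → A × Bool} {t : ℕ → A} (h : Directs ΔS t) :
    ∃ ΔS' : ℕ → A × Bool, (∀ k, (ΔS' k).1 = (ΔS k).1) ∧ Directs ΔS' (tl t) := by
  classical
  obtain ⟨ts, rfl, hr, hs⟩ := h
  -- First letters are removed from `ts 0, …, ts n`, where `n` is the index of the first letter of
  -- spin `L` (from all `ts n` if there is no such letter).
  refine ⟨fun n => ((ΔS n).1,
      if ∀ i < n, (ΔS i).2 = true then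
        (if (ΔS n).2 = true then decide (ts (n + 1) 0 = (ΔS n).1) else true)
      else (ΔS n).2), fun k => rfl,
    fun n => if ∀ i < n, (ΔS i).2 = true then tl (ts n) else ts n, by simp, ?_, ?_⟩
  · intro n
    dsimp only
    split_ifs
    · exact (hr n).tl
    · exact hr n
  · intro n
    have hn := hs n
    generalize hΔ : ΔS n = x at hn
    obtain ⟨a, b⟩ := x
    have hsucc : (∀ i < n + 1, (ΔS i).2 = true) ↔ (∀ i < n, (ΔS i).2 = true) ∧ b = true := by
      constructor
      · exact fun h => ⟨fun i hi => h i (by omega), by simpa [hΔ] using h n (by omega)⟩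
      · rintro ⟨h1, h2⟩ i hi
        rcases Nat.lt_succ_iff_lt_or_eq.1 hi with h | rfl
        · exact h1 i h
        · simpa [hΔ] using h2
    dsimp only
    by_cases hall : ∀ i < n, (ΔS i).2 = true
    · cases b with
      | false =>
        have hno : ¬ ∀ i < n + 1, (ΔS i).2 = true := fun h => by simpa using (hsucc.1 h).2
        rw [if_pos hall, if_pos hall, if_neg hno, hΔ, if_neg Bool.false_ne_true]
        exact ((substOf_L_iff_R a _ _).1 hn).2
      | true =>
        rw [if_pos hall, if_pos hall, if_pos (hsucc.2 ⟨hall, rfl⟩), hΔ, if_pos rfl]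
        by_cases hw : ts (n + 1) 0 = a
        · rw [decide_eq_true hw]
          exact substOf_R_tl_of_eq hn hw
        · rw [decide_eq_false hw]
          exact substOf_R_tl_of_ne hn hw
    · rw [if_neg hall, if_neg hall, if_neg (fun h => hall (hsucc.1 h).1), hΔ]
      exact hn

/-- If `t` begins with the first letter `a` of its directive word, then this letter can be given
spin `L`. -/
theorem Directs.exists_L {ΔS : ℕ → A × Bool} {t : ℕ → A} (h : Directs ΔS t)
    (h0 : t 0 = (ΔS 0).1) :
    ∃ (t' : ℕ → A) (ΔS' : ℕ → A × Bool), (∀ k, (ΔS' k).1 = (ΔS (k + 1)).1) ∧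
      SubstOf (fun b => muS ((ΔS 0).1, false) [b]) t' t ∧ Directs ΔS' t' := by
  obtain ⟨-, t', hs, hd⟩ := directs_cons.1 h
  generalize ΔS 0 = x at hs h0
  obtain ⟨a, b⟩ := x
  cases b with
  | false => exact ⟨t', tl ΔS, fun k => rfl, hs, hd⟩
  | true =>
    obtain ⟨ΔS', hv, hd'⟩ := hd.tail
    have hw : t' 0 = a := (substOf_R_zero hs).symm.trans h0
    exact ⟨tl t', ΔS', hv, (substOf_L_iff_R a _ _).2 ⟨h0.symm, substOf_R_tl_of_eq hs hw⟩, hd'⟩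

end Infinite

/-- an episturmian word `t` directed by a spinned version of `Δ` begins
with `Pal(x₁⋯x_n)` iff `t` has a directive word which is a spinned version of `Δ`
whose first `n` letters all have spin `L`. -/
theorem begins_with_pal_iff_L_spinned_prefix
    {A : Type*} [Fintype A] [DecidableEq A]
    (Δ : ℕ → A) (s : ℕ → A) (hs : IsEpistandardOf Δ s)
    (t : ℕ → A) (ΔS : ℕ → A × Bool)
    (hver : ∀ k, (ΔS k).1 = Δ k) (hdir : Directs ΔS t)
    (n : ℕ) :
    IsPref (Pal (prefWord Δ n)) t ↔
      ∃ ΔS' : ℕ → A × Bool, (∀ k, (ΔS' k).1 = Δ k) ∧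
        (∀ k, k < n → (ΔS' k).2 = false) ∧ Directs ΔS' t := by
  clear hs
  induction n generalizing Δ t ΔS with
  | zero =>
    exact ⟨fun _ => ⟨ΔS, hver, by simp, hdir⟩, fun _ => by simpa [prefWord, Pal] using isPref_nil t⟩
  | succ n ih =>
    rw [prefWord_succ, Pal_cons]
    constructor
    · intro hp
      have h0 : t 0 = (ΔS 0).1 := by
        have := hp
        rw [psi_eq_cons_Rm, isPref_cons] at this
        rw [hver, this.1]
      obtain ⟨t', ΔT, hv, hsub, hd⟩ := hdir.exists_L h0
      rw [hver] at hsub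
      obtain ⟨ΔT', h1, h2, h3⟩ :=
        (ih (tl Δ) t' ΔT (fun k => (hv k).trans (hver _)) hd).1 ((isPref_psi_iff hsub _).1 hp)
      refine ⟨fun k => Nat.casesOn k (Δ 0, false) ΔT', ?_, ?_, ?_⟩
      · rintro (_ | k)
        · rfl
        · exact h1 k
      · rintro (_ | k) hk
        · rfl
        · exact h2 k (by omega)
      · exact directs_cons.2 ⟨(directs_cons.1 hdir).1, t', hsub, h3⟩
    · rintro ⟨ΔS', h1, h2, h3⟩
      obtain ⟨-, t', hsub, hd⟩ := directs_cons.1 h3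
      have h0 : ΔS' 0 = (Δ 0, false) := Prod.ext (h1 0) (h2 0 (by omega))
      rw [h0] at hsub
      rw [isPref_psi_iff hsub]
      exact (ih (tl Δ) t' (tl ΔS') (fun k => h1 (k + 1)) hd).2
        ⟨tl ΔS', fun k => h1 (k + 1), fun k hk => h2 (k + 1) (by omega), hd⟩

end EpiQP
end

section
/- Let t be an infinite word over a finite alphabet A, let q be a finite word, and let a and c be two distinct letters. If t is covered by the set {q, qa} and also covered by the set {q, qc}, then t is q-quasiperiodic. -/
/-!
The proof looks at gaps between occurrences of `q`. If no occurrence of `q` starts in the window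
`(k, k + |q|]`, then a covering by `{q, qa}` can only jump over that window by using `qa` at
position `k`, so the letter of `t` at position `k + |q|` is `a` (`letter_of_gap`). Two coverings
with `a ≠ c` would force two different letters there, so every window `(k, k + |q|]` contains the
start of an occurrence of `q`. Iterating from the occurrence at `0` gives the required sequence of
prefixes. The window with `q = ε` is empty, so the same argument also yields `q ≠ ε`.
-/

namespace EpiQP

theorem occursAt_of_isPref_append {A : Type*} {t : ℕ → A} {p u : List A}
    (h : IsPref (p ++ u) t) : OccursAt u t p.length := by
  intro i hi
  have := h (p.length + i) (by simp only [List.length_append]; omega)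
  simpa using this

theorem isPref_prefWord_append {A : Type*} {t : ℕ → A} {k : ℕ} {u : List A}
    (h : OccursAt u t k) : IsPref (prefWord t k ++ u) t := by
  intro i hi
  simp only [List.get_eq_getElem, List.getElem_append]
  split_ifs with hk
  · simp [prefWord]
  · simp only [prefWord, List.length_ofFn, List.length_append] at hk hi ⊢
    have := h (i - k) (by omega)
    rw [show k + (i - k) = i by omega] at this
    simpa using this

theorem OccursAt.of_append {A : Type*} {t : ℕ → A} {k : ℕ} {u v : List A}
    (h : OccursAt (u ++ v) t k) : OccursAt u t k := by
  intro i hi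
  have := h i (by simp only [List.length_append]; omega)
  simpa [List.getElem_append_left hi] using this

theorem OccursAt.of_mem {A : Type*} {t : ℕ → A} {k : ℕ} {q z : List A} {a : A}
    (hz : z ∈ ({q, q ++ [a]} : Set (List A))) (h : OccursAt z t k) : OccursAt q t k := by
  rcases hz with rfl | rfl
  · exact h
  · exact h.of_append

/-- Only `q ++ [a]`, placed at position `k`, can bridge a window `(k, k + |q|]` in which no
occurrence of `q` starts. -/
theorem letter_of_gap {A : Type*} {t : ℕ → A} {q : List A} {a : A}
    (h : CoveredBy {q, q ++ [a]} t) {k : ℕ}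
    (hgap : ∀ k', k < k' → k' ≤ k + q.length → ¬ OccursAt q t k') :
    t (k + q.length) = a := by
  obtain ⟨p, z, hp0, hz, hlen, hpref⟩ := h
  have hex : ∃ n, k < (p n).length :=
    ⟨k + 1, (strictMono_nat_of_lt_succ fun n => (hlen n).1).le_apply⟩
  classical
  -- The first covering word starting after `k` has a predecessor, which starts at or before `k`.
  obtain ⟨n, hn⟩ : ∃ n, Nat.find hex = n + 1 := by
    refine Nat.exists_eq_succ_of_ne_zero fun h0 => ?_
    have := Nat.find_spec hex
    simp [h0, hp0] at this
  have h1 : k < (p (n + 1)).length := hn ▸ Nat.find_spec hex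
  have h2 : (p n).length ≤ k := not_lt.1 (Nat.find_min hex (by omega))
  have h3 : k + q.length < (p (n + 1)).length := by
    by_contra hle
    exact hgap _ h1 (not_lt.1 hle) ((occursAt_of_isPref_append (hpref _)).of_mem (hz _))
  have h4 := (hlen n).2
  rcases hz n with hq | hq
  · rw [hq] at h4
    omega
  · have hocc := occursAt_of_isPref_append (hpref n)
    rw [hq] at h4 hocc
    simp only [List.length_append, List.length_singleton] at h4
    obtain rfl : (p n).length = k := by omega
    have := hocc q.length (by simp)
    simpa using this.symm

/-- if `t` is covered by `{q, qa}` and by `{q, qc}` for distinct letters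
`a` and `c`, then `t` is `q`-quasiperiodic. -/
theorem quasiperiodic_of_two_covers
    {A : Type*} [Fintype A]
    (t : ℕ → A) (q : List A) (a c : A) (hac : a ≠ c)
    (h1 : CoveredBy {q, q ++ [a]} t) (h2 : CoveredBy {q, q ++ [c]} t) :
    IsQuasiperiod q t := by
  have hwin : ∀ k, ∃ k', k < k' ∧ k' ≤ k + q.length ∧ OccursAt q t k' := by
    intro k
    by_contra! hgap
    exact hac ((letter_of_gap h1 hgap).symm.trans (letter_of_gap h2 hgap))
  have h0 : OccursAt q t 0 := by
    obtain ⟨p, z, hp0, hz, -, hpref⟩ := h1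
    have := (occursAt_of_isPref_append (hpref 0)).of_mem (hz 0)
    simpa [hp0] using this
  refine ⟨?_, ?_⟩
  · rintro rfl
    obtain ⟨k', hlt, hle, -⟩ := hwin 0
    simp at hle
    omega
  choose f hf1 hf2 hf3 using hwin
  refine ⟨fun n => prefWord t (f^[n] 0), by simp [prefWord], fun n => ?_, fun n => ?_⟩
  · simp only [prefWord, List.length_ofFn, Function.iterate_succ_apply']
    exact ⟨hf1 _, hf2 _⟩
  · refine isPref_prefWord_append ?_
    cases n with
    | zero => exact h0
    | succ n =>
      rw [Function.iterate_succ_apply']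
      exact hf3 _

end EpiQP
end
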